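/- Let f : X → X be a minimal continuous map on a compact metric space X. Then the following conditions are equivalent: (1) f × f² is topologically transitive; (2) f is multi-transitive; (3) f is weakly mixing; (4) f is Δ-transitive. -/

import Mathlib

open Set Function

/-- A continuous self-map is topologically transitive if every pair of nonempty
open sets is connected by some positive iterate. -/
def TopTransitive {X : Type*} [TopologicalSpace X] (f : X → X) : Prop :=
  ∀ U V : Set X, IsOpen U → IsOpen V → U.Nonempty → V.Nonempty →
    ∃ n : ℕ, 0 < n ∧ (f^[n] '' U ∩ V).Nonempty

/-- The map `f^{(∗m)} = f × f² × ⋯ × f^m` acting on `X^m` (coordinates indexed by `Fin m`,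
where coordinate `i` is moved by `f^[i+1]`). -/
def starMap {X : Type*} (f : X → X) (m : ℕ) : (Fin m → X) → (Fin m → X) :=
  fun x i => f^[(i : ℕ) + 1] (x i)

/-- `f` is weakly mixing if `f × f` is topologically transitive. -/
def WeaklyMixing {X : Type*} [TopologicalSpace X] (f : X → X) : Prop :=
  TopTransitive (fun p : X × X => (f p.1, f p.2))

/-- `f` is multi-transitive if `f × f² × ⋯ × f^m` is topologically transitive
for every `m ≥ 1`. -/
def MultiTransitive {X : Type*} [TopologicalSpace X] (f : X → X) : Prop :=
  ∀ m : ℕ, 1 ≤ m → TopTransitive (starMap f m)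

/-- `f` is Δ-transitive if for each `m ≥ 1` there is a residual set `Y ⊆ X` such that
for every `x ∈ Y` the diagonal tuple `(x, …, x)` has dense orbit under `f × f² × ⋯ × f^m`. -/
def DeltaTransitive {X : Type*} [TopologicalSpace X] (f : X → X) : Prop :=
  ∀ m : ℕ, 1 ≤ m → ∃ Y : Set X, Y ∈ residual X ∧
    ∀ x ∈ Y, Dense (Set.range fun n : ℕ => (starMap f m)^[n] (fun _ : Fin m => x))

/-- A set `S ⊆ ℕ` is syndetic if there is `L > 0` with `[n, n+L] ∩ S ≠ ∅` for every `n`. -/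
def Syndetic (S : Set ℕ) : Prop :=
  ∃ L : ℕ, 0 < L ∧ ∀ n : ℕ, ∃ k ∈ S, n ≤ k ∧ k ≤ n + L

/-- `N(U,V;f) = {n > 0 : f^n(U) ∩ V ≠ ∅}`. -/
def NSet {X : Type*} (f : X → X) (U V : Set X) : Set ℕ :=
  {n | 0 < n ∧ (f^[n] '' U ∩ V).Nonempty}

/-- `f` is syndetically transitive if `N(U,V;f)` is syndetic for all nonempty open `U, V`. -/
def SyndeticallyTransitive {X : Type*} [TopologicalSpace X] (f : X → X) : Prop :=
  ∀ U V : Set X, IsOpen U → IsOpen V → U.Nonempty → V.Nonempty → Syndetic (NSet f U V)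

/-- `f` is strongly transitive if for every nonempty open `U` there is `M > 0` with
`⋃_{j=1}^M f^j(U) = X`. -/
def StronglyTransitive {X : Type*} [TopologicalSpace X] (f : X → X) : Prop :=
  ∀ U : Set X, IsOpen U → U.Nonempty →
    ∃ M : ℕ, 0 < M ∧ (⋃ j ∈ Finset.Icc 1 M, f^[j] '' U) = Set.univ

/-- `f` is minimal if the only nonempty closed `f`-invariant subset is the whole space. -/
def MinimalMap {X : Type*} [TopologicalSpace X] (f : X → X) : Prop :=
  ∀ K : Set X, IsClosed K → K.Nonempty → f '' K ⊆ K → K = Set.univ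

/-!
Assume that `f × f²` is transitive, and let `W ⊆ X × X` be closed and `f × f`-invariant with
nonempty interior. Fix an `f`-invariant probability measure `μ`. The measure of the section `W_x` is
upper semicontinuous in `x` and does not decrease along orbits, so it is constant by minimality.
Hence `x ↦ W_x` is a continuous map from `X` to the measure algebra of `μ` along which `f` acts
isometrically, and transitivity of `f × f²` forces such a map to be constant. Since `μ` charges
every nonempty open set, all sections contain a common nonempty open set, and `W = X × X` follows
from strong transitivity. So `f` is weakly mixing.

If `f` is weakly mixing, then the return sets `N(U, V)` of a syndetically transitive map are thickly
syndetic. Thickly syndetic sets form a filter that is stable under division by positive integers,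
which yields the simultaneous return times required for multi-transitivity.

If `f` is multi-transitive, strong transitivity turns the return times of boxes into return times of
the diagonal, and a Baire category argument gives Δ-transitivity. Conversely, a single dense orbit
of `f × f² × ⋯ × f^m` makes this map transitive.
-/

open Filter MeasureTheory Topology

section TopTransitive

lemma exists_univ_pi_subset_of_isOpen {ι : Type*} [Finite ι] {X : ι → Type*}
    [∀ i, TopologicalSpace (X i)] {V : Set (∀ i, X i)} (hV : IsOpen V) (hVn : V.Nonempty) :
    ∃ v : ∀ i, Set (X i), (∀ i, IsOpen (v i)) ∧ (∀ i, (v i).Nonempty) ∧ univ.pi v ⊆ V := by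
  obtain ⟨x, hx⟩ := hVn
  obtain ⟨v, hv, hvV⟩ := isOpen_pi_iff'.1 hV x hx
  exact ⟨v, fun i => (hv i).1, fun i => ⟨x i, (hv i).2⟩, hvV⟩

lemma mem_nset {X : Type*} {f : X → X} {U V : Set X} {n : ℕ} :
    n ∈ NSet f U V ↔ 0 < n ∧ ∃ x ∈ U, f^[n] x ∈ V :=
  and_congr_right' image_inter_nonempty_iff

lemma add_mem_nset_of_mem_nset_preimage {X : Type*} {f : X → X} {U V : Set X} {n i : ℕ}
    (h : n ∈ NSet f U (f^[i] ⁻¹' V)) : n + i ∈ NSet f U V := by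
  obtain ⟨hn, x, hxU, hxV⟩ := mem_nset.1 h
  refine mem_nset.2 ⟨by lia, x, hxU, ?_⟩
  rwa [add_comm, iterate_add_apply]

lemma starMap_iterate_apply {X : Type*} (f : X → X) (m n : ℕ) (x : Fin m → X) (i : Fin m) :
    (starMap f m)^[n] x i = f^[((i : ℕ) + 1) * n] (x i) := by
  induction n generalizing x with
  | zero => rfl
  | succ n ih => rw [iterate_succ_apply, ih, starMap, ← iterate_add_apply, mul_add_one]

lemma surjective_starMap {X : Type*} {f : X → X} (hsurj : Surjective f) (m : ℕ) :
    Surjective (starMap f m) :=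
  Surjective.piMap fun i => hsurj.iterate (i + 1)

variable {X : Type*} [TopologicalSpace X] {f : X → X}

lemma continuous_starMap (hf : Continuous f) (m : ℕ) : Continuous (starMap f m) :=
  continuous_pi fun i => (hf.iterate (i + 1)).comp (continuous_apply i)

lemma topTransitive_starMap_iff {m : ℕ} :
    TopTransitive (starMap f m) ↔ ∀ U V : Fin m → Set X,
      (∀ i, IsOpen (U i)) → (∀ i, IsOpen (V i)) → (∀ i, (U i).Nonempty) → (∀ i, (V i).Nonempty) →
        ∃ n, 0 < n ∧ ∀ i, ((i : ℕ) + 1) * n ∈ NSet f (U i) (V i) := by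
  constructor
  · intro h U V hU hV hUn hVn
    obtain ⟨n, hn, _, ⟨x, hx, rfl⟩, hxV⟩ := h (univ.pi U) (univ.pi V)
      (isOpen_set_pi finite_univ fun i _ => hU i) (isOpen_set_pi finite_univ fun i _ => hV i)
      (univ_pi_nonempty_iff.2 hUn) (univ_pi_nonempty_iff.2 hVn)
    refine ⟨n, hn, fun i => mem_nset.2 ⟨by positivity, x i, hx i trivial, ?_⟩⟩
    rw [← starMap_iterate_apply]
    exact hxV i trivial
  · intro h U V hU hV hUn hVn
    obtain ⟨u, hu, hun, huU⟩ := exists_univ_pi_subset_of_isOpen hU hUn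
    obtain ⟨v, hv, hvn, hvV⟩ := exists_univ_pi_subset_of_isOpen hV hVn
    obtain ⟨n, hn, hmem⟩ := h u v hu hv hun hvn
    choose x hxu hxv using fun i => (mem_nset.1 (hmem i)).2
    refine ⟨n, hn, _, mem_image_of_mem _ (huU fun i _ => hxu i), hvV fun i _ => ?_⟩
    rw [starMap_iterate_apply]
    exact hxv i

lemma topTransitive_of_denseRange_iterate (hf : Continuous f) (hsurj : Surjective f) {x : X}
    (hx : DenseRange fun n => f^[n] x) : TopTransitive f := by
  intro U V hU hV hUn hVn
  obtain ⟨k, hk⟩ := hx.exists_mem_open hU hUn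
  obtain ⟨l, hl⟩ := hx.exists_mem_open (hV.preimage (hf.iterate (k + 1)))
    (hVn.preimage (hsurj.iterate (k + 1)))
  refine ⟨l + 1, l.succ_pos, _, mem_image_of_mem _ hk, ?_⟩
  rw [mem_preimage, ← iterate_add_apply] at hl
  rwa [← iterate_add_apply, show l + 1 + k = k + 1 + l by ring]

lemma topTransitive_of_forall_isClosed_eq_univ (hf : Continuous f) (hsurj : Surjective f)
    (h : ∀ K, IsClosed K → MapsTo f K K → (interior K).Nonempty → K = univ) :
    TopTransitive f := by
  intro U V hU hV hUn hVn
  set orbit : Set X := ⋃ n, f^[n] '' U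
  have hU_orbit : U ⊆ orbit := fun x hx => mem_iUnion.2 ⟨0, x, hx, rfl⟩
  have hmaps : MapsTo f orbit orbit := by
    intro y hy
    obtain ⟨n, x, hx, rfl⟩ := mem_iUnion.1 hy
    exact mem_iUnion.2 ⟨n + 1, x, hx, iterate_succ_apply' f n x⟩
  have hdense : Dense orbit := dense_iff_closure_eq.2 <| h _ isClosed_closure (hmaps.closure hf)
    (hUn.mono (interior_maximal (hU_orbit.trans subset_closure) hU))
  obtain ⟨y, hyV, hy⟩ := hdense.inter_open_nonempty _ (hV.preimage hf) (hVn.preimage hsurj)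
  obtain ⟨n, x, hx, rfl⟩ := mem_iUnion.1 hy
  refine ⟨n + 1, n.succ_pos, _, mem_image_of_mem _ hx, ?_⟩
  rwa [iterate_succ_apply']

end TopTransitive

namespace MinimalMap

variable {X : Type*} [TopologicalSpace X] {f : X → X}

lemma surjective [CompactSpace X] [T2Space X] (hmin : MinimalMap f) (hf : Continuous f) :
    Surjective f := by
  rw [← range_eq_univ]
  rcases isEmpty_or_nonempty X with _ | _
  · exact Subsingleton.elim _ _
  · exact hmin _ (isCompact_range hf).isClosed (range_nonempty f) (image_subset_range f _)

lemma denseRange_iterate (hmin : MinimalMap f) (hf : Continuous f) (x : X) :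
    DenseRange fun n => f^[n] x := by
  have hmaps : MapsTo f (range fun n => f^[n] x) (range fun n => f^[n] x) := by
    rintro _ ⟨n, rfl⟩
    exact ⟨n + 1, iterate_succ_apply' f n x⟩
  exact dense_iff_closure_eq.2 <| hmin _ isClosed_closure ⟨x, subset_closure ⟨0, rfl⟩⟩
    (hmaps.closure hf).image_subset

lemma exists_forall_exists_le_iterate_mem [CompactSpace X] (hmin : MinimalMap f)
    (hf : Continuous f) {V : Set X} (hV : IsOpen V) (hVn : V.Nonempty) :
    ∃ L, ∀ x, ∃ n ≤ L, f^[n] x ∈ V := by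
  obtain ⟨t, ht⟩ := isCompact_univ.elim_finite_subcover (fun n => f^[n] ⁻¹' V)
    (fun n => hV.preimage (hf.iterate n))
    (fun x _ => mem_iUnion.2 ((hmin.denseRange_iterate hf x).exists_mem_open hV hVn))
  refine ⟨t.sup id, fun x => ?_⟩
  obtain ⟨n, hn, hx⟩ := mem_iUnion₂.1 (ht (mem_univ x))
  exact ⟨n, Finset.le_sup (f := id) hn, hx⟩

lemma syndeticallyTransitive [CompactSpace X] (hmin : MinimalMap f) (hf : Continuous f) :
    SyndeticallyTransitive f := by
  rintro U V - hV ⟨x, hx⟩ hVn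
  obtain ⟨L, hL⟩ := hmin.exists_forall_exists_le_iterate_mem hf hV hVn
  refine ⟨L + 1, L.succ_pos, fun n => ?_⟩
  obtain ⟨j, hj, hjV⟩ := hL (f^[n + 1] x)
  rw [← iterate_add_apply] at hjV
  exact ⟨j + (n + 1), mem_nset.2 ⟨by lia, x, hx, hjV⟩, by lia, by lia⟩

lemma stronglyTransitive [CompactSpace X] [T2Space X] (hmin : MinimalMap f)
    (hf : Continuous f) : StronglyTransitive f := by
  intro U hU hUn
  obtain ⟨L, hL⟩ := hmin.exists_forall_exists_le_iterate_mem hf hU hUn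
  refine ⟨L + 1, L.succ_pos, eq_univ_of_forall fun y => ?_⟩
  obtain ⟨w, rfl⟩ := (hmin.surjective hf).iterate (L + 1) y
  obtain ⟨n, hn, hw⟩ := hL w
  refine mem_iUnion₂.2 ⟨L + 1 - n, Finset.mem_Icc.2 (by lia), f^[n] w, hw, ?_⟩
  rw [← iterate_add_apply, Nat.sub_add_cancel (by lia)]

lemma eq_of_upperSemicontinuous_of_forall_le {β : Type*} [LinearOrder β] (hmin : MinimalMap f)
    {u : X → β} (hu : UpperSemicontinuous u) (hle : ∀ x, u x ≤ u (f x)) (x y : X) :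
    u x = u y := by
  have key (x y : X) : u x ≤ u y := by
    have huniv : u ⁻¹' Ici (u x) = univ :=
      hmin _ (hu.isClosed_preimage (u x)) ⟨x, le_rfl⟩
        (image_subset_iff.2 fun z hz => le_trans hz (hle z))
    exact eq_univ_iff_forall.1 huniv y
  exact le_antisymm (key x y) (key y x)

lemma isOpenPosMeasure [MeasurableSpace X] [OpensMeasurableSpace X] (hmin : MinimalMap f)
    (hf : Continuous f) {μ : Measure X} [NeZero μ] (hμ : MeasurePreserving f μ μ) :
    μ.IsOpenPosMeasure := by
  refine ⟨fun O hO hOn hO0 => NeZero.ne μ (Measure.measure_univ_eq_zero.1 ?_)⟩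
  have hcover : ⋃ n, f^[n] ⁻¹' O = univ :=
    eq_univ_of_forall fun x => mem_iUnion.2 ((hmin.denseRange_iterate hf x).exists_mem_open hO hOn)
  rw [← hcover]
  refine measure_iUnion_null fun n => ?_
  rw [(hμ.iterate n).measure_preimage hO.measurableSet.nullMeasurableSet, hO0]

end MinimalMap

section ThicklySyndetic

/-- The filter of thickly syndetic subsets of `ℕ`: those `S` such that, for every `k`, the starting
points of the blocks of `k + 1` consecutive integers contained in `S` form a syndetic set. -/
def thicklySyndetic : Filter ℕ where
  sets := {S | ∀ k, Syndetic {p | ∀ i ≤ k, p + i ∈ S}}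
  univ_sets := fun _ => ⟨1, one_pos, fun n => ⟨n, fun _ _ => trivial, by lia, by lia⟩⟩
  sets_of_superset hS hST k := by
    obtain ⟨L, hL, h⟩ := hS k
    refine ⟨L, hL, fun n => ?_⟩
    obtain ⟨p, hp, hnp⟩ := h n
    exact ⟨p, fun i hi => hST (hp i hi), hnp⟩
  inter_sets {S T} hS hT k := by
    obtain ⟨L, hL, hLT⟩ := hT k
    obtain ⟨K, -, hKS⟩ := hS (L + k)
    refine ⟨K + L, by lia, fun n => ?_⟩
    obtain ⟨p, hpS, hnp, hpK⟩ := hKS n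
    obtain ⟨q, hqT, hpq, hqL⟩ := hLT p
    refine ⟨q, fun i hi => ⟨?_, hqT i hi⟩, by lia, by lia⟩
    rw [show q + i = p + (q - p + i) by lia]
    exact hpS _ (by lia)

lemma mem_thicklySyndetic {S : Set ℕ} :
    S ∈ thicklySyndetic ↔ ∀ k, Syndetic {p | ∀ i ≤ k, p + i ∈ S} :=
  Iff.rfl

instance : thicklySyndetic.NeBot := by
  refine forall_mem_nonempty_iff_neBot.1 fun S hS => ?_
  obtain ⟨L, -, hL⟩ := mem_thicklySyndetic.1 hS 0
  obtain ⟨p, hp, -⟩ := hL 0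
  exact ⟨p, hp 0 le_rfl⟩

lemma tendsto_mul_left_thicklySyndetic {a : ℕ} (ha : 0 < a) :
    Tendsto (a * ·) thicklySyndetic thicklySyndetic := by
  intro S hS k
  obtain ⟨L, -, h⟩ := hS (a * (k + 1))
  refine ⟨L + 1, L.succ_pos, fun n => ?_⟩
  obtain ⟨p, hpS, hnp, hpL⟩ := h (a * n)
  have hlt : p < a * (p / a + 1) := Nat.lt_mul_div_succ p ha
  have hle : a * (p / a) ≤ p := Nat.mul_div_le p a
  refine ⟨p / a + 1, fun i hi => ?_, ?_, ?_⟩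
  · have hik : a * i ≤ a * k := Nat.mul_le_mul_left a hi
    have hsplit : a * (p / a + 1 + i) = p + (a * (p / a + 1 + i) - p) := by lia
    rw [mem_preimage, hsplit]
    exact hpS _ (by lia)
  · have : n ≤ p / a := (Nat.le_div_iff_mul_le ha).2 (by linarith)
    lia
  · have : p / a ≤ n + L := Nat.div_le_of_le_mul (by nlinarith)
    lia

end ThicklySyndetic

namespace WeaklyMixing

variable {X : Type*} [TopologicalSpace X] {f : X → X}

lemma exists_nset_subset_inter (h : WeaklyMixing f) (hf : Continuous f) {A B C D : Set X}
    (hA : IsOpen A) (hB : IsOpen B) (hC : IsOpen C) (hD : IsOpen D)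
    (hAn : A.Nonempty) (hBn : B.Nonempty) (hCn : C.Nonempty) (hDn : D.Nonempty) :
    ∃ U V, IsOpen U ∧ IsOpen V ∧ U.Nonempty ∧ V.Nonempty ∧
      NSet f U V ⊆ NSet f A B ∩ NSet f C D := by
  obtain ⟨n, -, _, ⟨⟨a, b⟩, ⟨ha, hb⟩, rfl⟩, hcd⟩ :=
    h (A ×ˢ B) (C ×ˢ D) (hA.prod hB) (hC.prod hD) (hAn.prod hBn) (hCn.prod hDn)
  change (Prod.map f f)^[n] (a, b) ∈ C ×ˢ D at hcd
  rw [Prod.map_iterate] at hcd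
  refine ⟨A ∩ f^[n] ⁻¹' C, B ∩ f^[n] ⁻¹' D, hA.inter (hC.preimage (hf.iterate n)),
    hB.inter (hD.preimage (hf.iterate n)), ⟨a, ha, hcd.1⟩, ⟨b, hb, hcd.2⟩, fun k hk => ?_⟩
  obtain ⟨hk, x, ⟨hxA, hxC⟩, hxB, hxD⟩ := mem_nset.1 hk
  refine ⟨mem_nset.2 ⟨hk, x, hxA, hxB⟩, mem_nset.2 ⟨hk, f^[n] x, hxC, ?_⟩⟩
  rwa [(Commute.iterate_iterate_self f k n).eq]

lemma exists_nset_forall_add_mem (h : WeaklyMixing f) (hf : Continuous f)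
    (hsurj : Surjective f) {U V : Set X} (hU : IsOpen U) (hV : IsOpen V) (hUn : U.Nonempty)
    (hVn : V.Nonempty) (k : ℕ) :
    ∃ A B, IsOpen A ∧ IsOpen B ∧ A.Nonempty ∧ B.Nonempty ∧
      ∀ n ∈ NSet f A B, ∀ i ≤ k, n + i ∈ NSet f U V := by
  induction k with
  | zero =>
    refine ⟨U, V, hU, hV, hUn, hVn, fun n hn i hi => ?_⟩
    rwa [Nat.le_zero.1 hi]
  | succ k ih =>
    obtain ⟨A, B, hA, hB, hAn, hBn, hAB⟩ := ih
    obtain ⟨A', B', hA', hB', hAn', hBn', hsub⟩ := h.exists_nset_subset_inter hf hA hB hU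
      (hV.preimage (hf.iterate (k + 1))) hAn hBn hUn (hVn.preimage (hsurj.iterate (k + 1)))
    refine ⟨A', B', hA', hB', hAn', hBn', fun n hn i hi => ?_⟩
    rcases Nat.le_succ_iff.1 hi with hi | rfl
    · exact hAB n (hsub hn).1 i hi
    · exact add_mem_nset_of_mem_nset_preimage (hsub hn).2

lemma nset_mem_thicklySyndetic (h : WeaklyMixing f) (hf : Continuous f)
    (hsurj : Surjective f) (hsynd : SyndeticallyTransitive f) {U V : Set X} (hU : IsOpen U)
    (hV : IsOpen V) (hUn : U.Nonempty) (hVn : V.Nonempty) : NSet f U V ∈ thicklySyndetic := by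
  intro k
  obtain ⟨A, B, hA, hB, hAn, hBn, hAB⟩ := h.exists_nset_forall_add_mem hf hsurj hU hV hUn hVn k
  obtain ⟨L, hL, hmeet⟩ := hsynd A B hA hB hAn hBn
  refine ⟨L, hL, fun n => ?_⟩
  obtain ⟨p, hp, hnp⟩ := hmeet n
  exact ⟨p, hAB p hp, hnp⟩

theorem multiTransitive (h : WeaklyMixing f) (hf : Continuous f) (hsurj : Surjective f)
    (hsynd : SyndeticallyTransitive f) : MultiTransitive f := by
  refine fun m hm => topTransitive_starMap_iff.2 fun U V hU hV hUn hVn => ?_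
  have hmem (i : Fin m) : ∀ᶠ n in thicklySyndetic, ((i : ℕ) + 1) * n ∈ NSet f (U i) (V i) :=
    tendsto_mul_left_thicklySyndetic i.val.succ_pos
      (h.nset_mem_thicklySyndetic hf hsurj hsynd (hU i) (hV i) (hUn i) (hVn i))
  obtain ⟨n, hn⟩ := (eventually_all.2 hmem).exists
  exact ⟨n, Nat.pos_of_mul_pos_left (hn ⟨0, hm⟩).1, hn⟩

end WeaklyMixing


lemma setOf_denseRange_mem_residual {ι X Z : Type*} [TopologicalSpace X] [TopologicalSpace Z]
    [SecondCountableTopology Z] {φ : ι → X → Z} (hφ : ∀ n, Continuous (φ n))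
    (h : ∀ U V, IsOpen U → IsOpen V → U.Nonempty → V.Nonempty → ∃ n, ∃ x ∈ U, φ n x ∈ V) :
    {x | DenseRange fun n => φ n x} ∈ residual X := by
  have hmeet : ∀ V ∈ TopologicalSpace.countableBasis Z, ∀ᶠ x in residual X, ∃ n, φ n x ∈ V := by
    intro V hV
    have hVo := TopologicalSpace.isOpen_of_mem_countableBasis hV
    have hVn := TopologicalSpace.nonempty_of_mem_countableBasis hV
    refine residual_of_dense_open ?_ (dense_iff_inter_open.2 fun U hU hUn => ?_)
    · rw [ofPred_exists]
      exact isOpen_iUnion fun n => hVo.preimage (hφ n)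
    · obtain ⟨n, x, hxU, hxV⟩ := h U V hU hVo hUn hVn
      exact ⟨x, hxU, n, hxV⟩
  filter_upwards [(eventually_countable_ball (TopologicalSpace.countable_countableBasis Z)).2 hmeet]
    with x hx
  refine (TopologicalSpace.isBasis_countableBasis Z).dense_iff.2 fun V hV _ => ?_
  obtain ⟨n, hn⟩ := hx V hV
  exact ⟨φ n x, hn, n, rfl⟩

namespace MultiTransitive

variable {X : Type*} [TopologicalSpace X] {f : X → X}

/- The offset `i * j` compensates for a delay of `j` steps: if `f^[(i + 1) * n + j] z ∈ W i`, then
`f^[(i + 1) * (n + k + j)] z ∈ V i`. -/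
lemma exists_forall_lt_mapsTo (h : MultiTransitive f) (hf : Continuous f) (hsurj : Surjective f)
    {m : ℕ} (hm : 1 ≤ m) {V : Fin m → Set X} (hV : ∀ i, IsOpen (V i))
    (hVn : ∀ i, (V i).Nonempty) (M : ℕ) :
    ∃ W : Fin m → Set X, (∀ i, IsOpen (W i)) ∧ (∀ i, (W i).Nonempty) ∧
      ∀ j < M, ∃ k, ∀ i : Fin m, MapsTo f^[((i : ℕ) + 1) * k + i * j] (W i) (V i) := by
  induction M with
  | zero => exact ⟨V, hV, hVn, fun j hj => absurd hj j.not_lt_zero⟩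
  | succ M ih =>
    obtain ⟨W, hW, hWn, hWV⟩ := ih
    have hV' (i : Fin m) : IsOpen (f^[i * M] ⁻¹' V i) := (hV i).preimage (hf.iterate _)
    have hVn' (i : Fin m) : (f^[i * M] ⁻¹' V i).Nonempty := (hVn i).preimage (hsurj.iterate _)
    obtain ⟨n, -, hn⟩ := topTransitive_starMap_iff.1 (h m hm) W _ hW hV' hWn hVn'
    refine ⟨fun i => W i ∩ f^[((i : ℕ) + 1) * n] ⁻¹' (f^[i * M] ⁻¹' V i),
      fun i => (hW i).inter ((hV' i).preimage (hf.iterate _)),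
      fun i => (mem_nset.1 (hn i)).2, fun j hj => ?_⟩
    rcases Nat.lt_succ_iff_lt_or_eq.1 hj with hj | rfl
    · obtain ⟨k, hk⟩ := hWV j hj
      exact ⟨k, fun i => (hk i).mono_left inter_subset_left⟩
    · refine ⟨n, fun i x hx => ?_⟩
      rw [add_comm, iterate_add_apply]
      exact hx.2

lemma exists_mem_forall_iterate_mem (h : MultiTransitive f) (hf : Continuous f)
    (hsurj : Surjective f) (hstrong : StronglyTransitive f) {m : ℕ} {U : Set X}
    {V : Fin m → Set X} (hU : IsOpen U) (hUn : U.Nonempty) (hV : ∀ i, IsOpen (V i))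
    (hVn : ∀ i, (V i).Nonempty) : ∃ n, ∃ x ∈ U, ∀ i, f^[((i : ℕ) + 1) * n] x ∈ V i := by
  induction m generalizing U with
  | zero => exact ⟨0, hUn.some, hUn.some_mem, fun i => i.elim0⟩
  | succ m ih =>
    obtain ⟨L, -, hL⟩ := hstrong U hU hUn
    obtain ⟨W, hW, hWn, hWV⟩ := h.exists_forall_lt_mapsTo hf hsurj m.succ_pos hV hVn (L + 1)
    -- `W 0` takes the place of `U` here; strong transitivity then carries `x` back into `U`, with
    -- an uncontrolled but bounded delay `j`.
    obtain ⟨n, x, hx, hxn⟩ := ih (hW 0) (hWn 0) (fun i => hW i.succ) (fun i => hWn i.succ)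
    obtain ⟨y, rfl⟩ := hsurj.iterate n x
    obtain ⟨j, hj, z, hz, rfl⟩ := mem_iUnion₂.1 (eq_univ_iff_forall.1 hL y)
    obtain ⟨k, hk⟩ := hWV j (Nat.lt_succ_of_le (Finset.mem_Icc.1 hj).2)
    have hzW (i : Fin (m + 1)) : f^[((i : ℕ) + 1) * n + j] z ∈ W i := by
      cases i using Fin.cases with
      | zero => rwa [Fin.val_zero, zero_add, one_mul, iterate_add_apply]
      | succ i =>
        rw [Fin.val_succ, add_one_mul, add_assoc, iterate_add_apply, iterate_add_apply f n]
        exact hxn i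
    refine ⟨n + k + j, z, hz, fun i => ?_⟩
    rw [show ((i : ℕ) + 1) * (n + k + j) = (i + 1) * k + i * j + ((i + 1) * n + j) by ring,
      iterate_add_apply]
    exact hk i (hzW i)

theorem deltaTransitive [SecondCountableTopology X] (h : MultiTransitive f) (hf : Continuous f)
    (hsurj : Surjective f) (hstrong : StronglyTransitive f) : DeltaTransitive f := by
  refine fun m _ => ⟨_, setOf_denseRange_mem_residual
    (φ := fun n x => (starMap f m)^[n] fun _ => x) (fun n => ?_) fun U V hU hV hUn hVn => ?_,
    fun x hx => hx⟩
  · exact ((continuous_starMap hf m).iterate n).comp (continuous_pi fun _ => continuous_id)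
  · obtain ⟨v, hv, hvn, hvV⟩ := exists_univ_pi_subset_of_isOpen hV hVn
    obtain ⟨n, x, hx, hxv⟩ := h.exists_mem_forall_iterate_mem hf hsurj hstrong hU hUn hv hvn
    refine ⟨n, x, hx, hvV fun i _ => ?_⟩
    rw [starMap_iterate_apply]
    exact hxv i

end MultiTransitive

theorem DeltaTransitive.multiTransitive {X : Type*} [TopologicalSpace X] [BaireSpace X]
    {f : X → X} (h : DeltaTransitive f) (hf : Continuous f) (hsurj : Surjective f) :
    MultiTransitive f := by
  intro m hm
  obtain ⟨Y, hY, hdense⟩ := h m hm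
  rcases isEmpty_or_nonempty X with _ | _
  · have : Nonempty (Fin m) := ⟨⟨0, hm⟩⟩
    exact fun U _ _ _ hUn => isEmptyElim hUn.some
  obtain ⟨x, hx⟩ := (dense_of_mem_residual hY).nonempty
  exact topTransitive_of_denseRange_iterate (continuous_starMap hf m) (surjective_starMap hsurj m)
    (hdense x hx)

section InvariantMeasure

open scoped ENNReal BoundedContinuousFunction

variable {X : Type*} [MeasurableSpace X]

/-- The empirical measure of the first `n + 1` points of the orbit of `x` under `f`. The shift by
one avoids the empty average. -/
noncomputable def empiricalMeasure (f : X → X) (x : X) (n : ℕ) : ProbabilityMeasure X :=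
  ⟨((n + 1 : ℕ) : ℝ≥0∞)⁻¹ • ∑ k ∈ Finset.range (n + 1), Measure.dirac (f^[k] x), ⟨by
    simp only [Measure.smul_apply, Measure.coe_finsetSum, Finset.sum_apply, measure_univ,
      smul_eq_mul, Finset.sum_const, Finset.card_range, nsmul_eq_mul, mul_one]
    exact ENNReal.inv_mul_cancel (by simp) (by simp)⟩⟩

variable [TopologicalSpace X] {f : X → X}

lemma integral_empiricalMeasure [OpensMeasurableSpace X] (x : X) (n : ℕ) (φ : X →ᵇ ℝ) :
    ∫ y, φ y ∂(empiricalMeasure f x n : Measure X) = birkhoffAverage ℝ f φ (n + 1) x := by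
  rw [empiricalMeasure, ProbabilityMeasure.coe_mk, integral_smul_measure,
    integral_finsetSum_measure fun k _ => φ.integrable _, birkhoffAverage, birkhoffSum,
    ENNReal.toReal_inv, ENNReal.toReal_natCast]
  simp only [integral_dirac' _ _ φ.continuous.stronglyMeasurable]

variable [BorelSpace X] [HasOuterApproxClosed X]

lemma measurePreserving_of_tendsto_empiricalMeasure (hf : Continuous f) {x : X} {l : Filter ℕ}
    [l.NeBot] (hl : l ≤ atTop) {μ : ProbabilityMeasure X}
    (hμ : Tendsto (empiricalMeasure f x) l (𝓝 μ)) :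
    MeasurePreserving f (μ : Measure X) (μ : Measure X) := by
  refine ⟨hf.measurable, ?_⟩
  have : IsProbabilityMeasure ((μ : Measure X).map f) :=
    Measure.isProbabilityMeasure_map hf.aemeasurable
  refine ext_of_forall_integral_eq_of_IsFiniteMeasure fun φ => ?_
  rw [integral_map hf.aemeasurable φ.continuous.aestronglyMeasurable]
  rw [ProbabilityMeasure.tendsto_iff_forall_integral_tendsto] at hμ
  have hshift (n : ℕ) :
      ∫ y, φ (f y) ∂(empiricalMeasure f x n : Measure X) = birkhoffAverage ℝ f φ (n + 1) (f x) := by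
    refine (integral_empiricalMeasure x n (φ.compContinuous ⟨f, hf⟩)).trans ?_
    simp only [birkhoffAverage, birkhoffSum, ← iterate_succ_apply, iterate_succ_apply',
      BoundedContinuousFunction.compContinuous_apply, ContinuousMap.coe_mk]
  have hzero : Tendsto (fun n => ∫ y, φ (f y) ∂(empiricalMeasure f x n : Measure X) -
      ∫ y, φ y ∂(empiricalMeasure f x n : Measure X)) l (𝓝 0) := by
    simp only [hshift, integral_empiricalMeasure]
    exact ((tendsto_birkhoffAverage_apply_sub_birkhoffAverage' ℝ φ.isBounded_range f x).comp
      (tendsto_add_atTop_nat 1)).mono_left hl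
  exact sub_eq_zero.1 <|
    tendsto_nhds_unique ((hμ (φ.compContinuous ⟨f, hf⟩)).sub (hμ φ)) hzero

theorem exists_isProbabilityMeasure_measurePreserving [CompactSpace X] [T2Space X] [Nonempty X]
    (hf : Continuous f) : ∃ μ : Measure X, IsProbabilityMeasure μ ∧ MeasurePreserving f μ μ := by
  obtain ⟨x⟩ := ‹Nonempty X›
  obtain ⟨μ, -, hμ⟩ := (isCompact_univ (X := ProbabilityMeasure X)).ultrafilter_le_nhds
    ((hyperfilter ℕ).map (empiricalMeasure f x)) (by simp)
  exact ⟨μ, inferInstance,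
    measurePreserving_of_tendsto_empiricalMeasure hf Nat.hyperfilter_le_atTop hμ⟩

end InvariantMeasure

section ClosedRelations

open scoped symmDiff

lemma measure_symmDiff_eq_of_subset_preimage {Y : Type*} [MeasurableSpace Y] {μ : Measure Y}
    [IsFiniteMeasure μ] {g : Y → Y} (hg : MeasurePreserving g μ μ) {s s' t t' : Set Y}
    (hs : NullMeasurableSet s μ) (hs' : NullMeasurableSet s' μ) (ht : NullMeasurableSet t μ)
    (ht' : NullMeasurableSet t' μ) (hss' : s ⊆ g ⁻¹' s') (htt' : t ⊆ g ⁻¹' t')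
    (hμs : μ s' = μ s) (hμt : μ t' = μ t) : μ (s ∆ t) = μ (s' ∆ t') := by
  have hs_ae : s =ᵐ[μ] g ⁻¹' s' := ae_eq_of_subset_of_measure_ge hss'
    (by rw [hg.measure_preimage hs', hμs]) hs (measure_ne_top μ _)
  have ht_ae : t =ᵐ[μ] g ⁻¹' t' := ae_eq_of_subset_of_measure_ge htt'
    (by rw [hg.measure_preimage ht', hμt]) ht (measure_ne_top μ _)
  rw [measure_congr (hs_ae.symmDiff ht_ae), ← hg.measure_preimage (hs'.symmDiff ht')]
  rfl

variable {X Y : Type*} [TopologicalSpace X] [TopologicalSpace Y]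

lemma upperHemicontinuous_prodMk_preimage [CompactSpace Y] {W : Set (X × Y)} (hW : IsClosed W) :
    UpperHemicontinuous fun x => Prod.mk x ⁻¹' W := by
  refine upperHemicontinuous_iff_isClosed_compl_preimage_Iic_compl.2 fun u hu => ?_
  have hproj : (W ∩ Prod.snd ⁻¹' u).image Prod.fst =
      ((fun x => Prod.mk x ⁻¹' W) ⁻¹' Iic uᶜ)ᶜ := by
    ext x
    simp [subset_def]
  rw [← hproj]
  exact isClosedMap_fst_of_compactSpace _ (hW.inter (hu.preimage continuous_snd))

lemma upperSemicontinuous_measure_of_upperHemicontinuous [MeasurableSpace Y] {μ : Measure Y}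
    [μ.OuterRegular] {S : X → Set Y} (hS : UpperHemicontinuous S) :
    UpperSemicontinuous fun x => μ (S x) := by
  refine upperSemicontinuous_iff.2 fun x r hr => ?_
  obtain ⟨O, hSO, hO, hlt⟩ := (S x).exists_isOpen_lt_of_lt r hr
  filter_upwards [hS.forall_isOpen x O hO hSO] with x' hx'
  exact (measure_mono hx').trans_lt hlt

lemma continuous_measuredSets_of_upperHemicontinuous [MeasurableSpace Y] {μ : Measure Y}
    [IsFiniteMeasure μ] [μ.OuterRegular] {S : X → MeasuredSets μ}
    (hS : UpperHemicontinuous fun x => (S x : Set Y)) (hconst : ∀ x y, μ (S x) = μ (S y)) :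
    Continuous S := by
  refine continuous_iff_continuousAt.2 fun x => tendsto_iff_edist_tendsto_0.2 <|
    ENNReal.tendsto_nhds_zero.2 fun ε hε => ?_
  have hε' : ε / 2 ≠ 0 := (ENNReal.half_pos hε.ne').ne'
  obtain ⟨O, hSO, hO, hle⟩ := (S x : Set Y).exists_isOpen_le_add μ hε'
  filter_upwards [hS.forall_isOpen x O hO hSO] with x' hx'
  have hdiff (z : X) (hz : (S z : Set Y) ⊆ O) : μ (O \ S z) ≤ ε / 2 := by
    have hmeas : NullMeasurableSet (S z : Set Y) μ := (S z).2.nullMeasurableSet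
    refine (measure_sdiff_le_iff_le_add hmeas hz (measure_ne_top μ _)).2 ?_
    rwa [hconst z x]
  calc μ ((S x' : Set Y) ∆ S x)
      ≤ μ (S x' \ S x) + μ (S x \ S x') := measure_union_le _ _
    _ ≤ μ (O \ S x) + μ (O \ S x') := by gcongr
    _ ≤ ε / 2 + ε / 2 := add_le_add (hdiff x hSO) (hdiff x' hx')
    _ = ε := ENNReal.add_halves ε

end ClosedRelations

lemma exists_iterate_mem_of_topTransitive_starMap_two {X : Type*} [TopologicalSpace X] {f : X → X}
    (h : TopTransitive (starMap f 2)) {A B : Set X} (hA : IsOpen A) (hB : IsOpen B)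
    (hAn : A.Nonempty) (hBn : B.Nonempty) :
    ∃ n, ∃ a ∈ A, ∃ b ∈ A, f^[n] a ∈ A ∧ f^[2 * n] b ∈ B := by
  obtain ⟨n, -, hn⟩ := topTransitive_starMap_iff.1 h (fun _ => A) ![A, B] (fun _ => hA)
    (Fin.forall_fin_two.2 ⟨hA, hB⟩) (fun _ => hAn) (Fin.forall_fin_two.2 ⟨hAn, hBn⟩)
  obtain ⟨-, a, ha, hna⟩ := mem_nset.1 (hn 0)
  obtain ⟨-, b, hb, hnb⟩ := mem_nset.1 (hn 1)
  rw [Fin.val_zero, zero_add, one_mul] at hna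
  rw [Fin.val_one, one_add_one_eq_two] at hnb
  exact ⟨n, a, ha, b, hb, hna, hnb⟩

lemma dist_eq_zero_of_topTransitive_starMap_two {X Y : Type*} [TopologicalSpace X]
    [PseudoMetricSpace Y] {f : X → X} (h : TopTransitive (starMap f 2)) {g : X → Y}
    (hg : Continuous g) (hle : ∀ x y, dist (g (f x)) (g (f y)) ≤ dist (g x) (g y)) (x y : X) :
    dist (g x) (g y) = 0 := by
  -- With `a`, `b`, `f^[n] a` close to `x` and `f^[2n] b` close to `y`, the chain `x`, `f^[n] a`,
  -- `f^[2n] a`, `f^[2n] b`, `y` has short steps: the two middle ones are images of the short pairs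
  -- `(a, f^[n] a)` and `(a, b)`.
  have hle_iterate (n : ℕ) (a b : X) : dist (g (f^[n] a)) (g (f^[n] b)) ≤ dist (g a) (g b) := by
    induction n with
    | zero => rfl
    | succ n ih =>
      rw [iterate_succ_apply', iterate_succ_apply']
      exact (hle _ _).trans ih
  refine le_antisymm (le_of_forall_pos_le_add fun ε hε => ?_) dist_nonneg
  have hopen (z : X) : IsOpen {w | dist (g z) (g w) < ε / 6} :=
    isOpen_lt (continuous_const.dist hg) continuous_const
  have hmem (z : X) : dist (g z) (g z) < ε / 6 := by
    rw [dist_self]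
    positivity
  obtain ⟨n, a, ha, b, hb, hna, hnb⟩ := exists_iterate_mem_of_topTransitive_starMap_two h
    (hopen x) (hopen y) ⟨x, hmem x⟩ ⟨y, hmem y⟩
  rw [mem_ofPred_eq] at ha hb hna hnb
  have hmove : dist (g (f^[n] a)) (g (f^[2 * n] a)) ≤ dist (g a) (g (f^[n] a)) := by
    rw [two_mul, iterate_add_apply]
    exact hle_iterate n _ _
  calc dist (g x) (g y)
      ≤ dist (g x) (g (f^[n] a)) + dist (g (f^[n] a)) (g (f^[2 * n] a)) +
          dist (g (f^[2 * n] a)) (g y) := dist_triangle4 _ _ _ _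
    _ ≤ dist (g x) (g (f^[n] a)) + dist (g a) (g (f^[n] a)) +
          (dist (g a) (g b) + dist (g y) (g (f^[2 * n] b))) :=
        add_le_add (by gcongr) <| (dist_triangle_right _ _ (g (f^[2 * n] b))).trans <| by
          gcongr
          exact hle_iterate _ _ _
    _ ≤ 0 + ε := by
        linarith [dist_triangle_left (g a) (g (f^[n] a)) (g x),
          dist_triangle_left (g a) (g b) (g x)]

namespace MinimalMap

section InvariantClosedRelations

open scoped symmDiff

variable {X Y : Type*} [TopologicalSpace X] [TopologicalSpace Y] [CompactSpace Y]
  [MeasurableSpace Y] [OpensMeasurableSpace Y] {μ : Measure Y} [μ.OuterRegular] {f : X → X}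
  {g : Y → Y} {W : Set (X × Y)}

lemma measure_prodMk_preimage_eq (hmin : MinimalMap f) (hg : MeasurePreserving g μ μ)
    (hW : IsClosed W) (hmaps : MapsTo (Prod.map f g) W W) (x y : X) :
    μ (Prod.mk x ⁻¹' W) = μ (Prod.mk y ⁻¹' W) := by
  refine hmin.eq_of_upperSemicontinuous_of_forall_le
    (u := fun x => μ (Prod.mk x ⁻¹' W)) (upperSemicontinuous_measure_of_upperHemicontinuous
      (upperHemicontinuous_prodMk_preimage hW)) (fun z => ?_) x y
  have hmeas : MeasurableSet (Prod.mk (f z) ⁻¹' W) :=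
    (hW.preimage (Continuous.prodMk_right _)).measurableSet
  rw [← hg.measure_preimage hmeas.nullMeasurableSet]
  exact measure_mono fun w hw => hmaps hw

lemma measure_prodMk_preimage_symmDiff_eq_zero [IsFiniteMeasure μ] (hmin : MinimalMap f)
    (h : TopTransitive (starMap f 2)) (hg : MeasurePreserving g μ μ) (hW : IsClosed W)
    (hmaps : MapsTo (Prod.map f g) W W) (x y : X) :
    μ ((Prod.mk x ⁻¹' W) ∆ (Prod.mk y ⁻¹' W)) = 0 := by
  have hmeas (z : X) : MeasurableSet (Prod.mk z ⁻¹' W) :=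
    (hW.preimage (Continuous.prodMk_right z)).measurableSet
  have hconst := hmin.measure_prodMk_preimage_eq hg hW hmaps
  let S : X → MeasuredSets μ := fun z => ⟨Prod.mk z ⁻¹' W, hmeas z⟩
  have hcont : Continuous S := continuous_measuredSets_of_upperHemicontinuous
    (upperHemicontinuous_prodMk_preimage hW) hconst
  have hisom (a b : X) : dist (S (f a)) (S (f b)) = dist (S a) (S b) :=
    congrArg ENNReal.toReal (measure_symmDiff_eq_of_subset_preimage hg
      (hmeas a).nullMeasurableSet (hmeas (f a)).nullMeasurableSet (hmeas b).nullMeasurableSet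
      (hmeas (f b)).nullMeasurableSet (fun _ hw => hmaps hw) (fun _ hw => hmaps hw)
      (hconst _ _) (hconst _ _)).symm
  have hdist : dist (S x) (S y) = 0 :=
    dist_eq_zero_of_topTransitive_starMap_two h hcont (fun a b => (hisom a b).le) x y
  rwa [MeasuredSets.dist_def, measureReal_eq_zero_iff] at hdist

theorem eq_univ_of_isClosed_of_mapsTo [IsFiniteMeasure μ] [μ.IsOpenPosMeasure]
    (hmin : MinimalMap f) (hsurj : Surjective f) (h : TopTransitive (starMap f 2))
    (hg : MeasurePreserving g μ μ) (hstrong : StronglyTransitive g) (hW : IsClosed W)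
    (hmaps : MapsTo (Prod.map f g) W W) (hint : (interior W).Nonempty) : W = univ := by
  obtain ⟨⟨u, v⟩, huv⟩ := hint
  obtain ⟨A, B, -, hB, hu, hv, hAB⟩ := isOpen_prod_iff.1 isOpen_interior u v huv
  have hBu : B ⊆ Prod.mk u ⁻¹' W := fun b hb =>
    (interior_subset (hAB (mk_mem_prod hu hb)) : (u, b) ∈ W)
  have hBW (x : X) : B ⊆ Prod.mk x ⁻¹' W := by
    have hnull : μ (B \ Prod.mk x ⁻¹' W) = 0 := measure_mono_null
      ((sdiff_subset_sdiff_left hBu).trans subset_union_left)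
      (hmin.measure_prodMk_preimage_symmDiff_eq_zero h hg hW hmaps u x)
    have hopen : IsOpen (B \ Prod.mk x ⁻¹' W) := hB.sdiff (hW.preimage (Continuous.prodMk_right x))
    exact sdiff_eq_empty.1 (hopen.measure_eq_zero_iff μ |>.1 hnull)
  refine eq_univ_of_forall fun ⟨x, y⟩ => ?_
  obtain ⟨L, -, hL⟩ := hstrong B hB ⟨v, hv⟩
  obtain ⟨j, -, z, hz, rfl⟩ := mem_iUnion₂.1 (eq_univ_iff_forall.1 hL y)
  obtain ⟨x, rfl⟩ := hsurj.iterate j x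
  have hxz := hmaps.iterate j (hBW x hz)
  rwa [Prod.map_iterate] at hxz

end InvariantClosedRelations

theorem weaklyMixing_of_topTransitive_starMap_two {X : Type*} [TopologicalSpace X]
    [CompactSpace X] [TopologicalSpace.MetrizableSpace X] {f : X → X} (hmin : MinimalMap f)
    (hf : Continuous f) (h : TopTransitive (starMap f 2)) : WeaklyMixing f := by
  rcases isEmpty_or_nonempty X with _ | _
  · exact fun U _ _ _ hUn => isEmptyElim hUn.some
  borelize X
  obtain ⟨μ, hprob, hμ⟩ := exists_isProbabilityMeasure_measurePreserving hf
  have : μ.IsOpenPosMeasure := hmin.isOpenPosMeasure hf hμ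
  have hsurj := hmin.surjective hf
  exact topTransitive_of_forall_isClosed_eq_univ (hf.prodMap hf) (hsurj.prodMap hsurj)
    fun W hW hmaps hint => hmin.eq_univ_of_isClosed_of_mapsTo hsurj h hμ
      (hmin.stronglyTransitive hf) hW hmaps hint

end MinimalMap

/-- For a minimal continuous map `f` on a compact metric space the
following are equivalent: (1) `f × f²` is transitive; (2) `f` is multi-transitive;
(3) `f` is weakly mixing; (4) `f` is Δ-transitive. -/
theorem statement5 {X : Type*} [MetricSpace X] [CompactSpace X] (f : X → X)
    (hf : Continuous f) (hmin : MinimalMap f) :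
    List.TFAE [TopTransitive (starMap f 2), MultiTransitive f,
      WeaklyMixing f, DeltaTransitive f] := by
  have hsurj := hmin.surjective hf
  tfae_have 1 → 3 := hmin.weaklyMixing_of_topTransitive_starMap_two hf
  tfae_have 3 → 2 := fun h => h.multiTransitive hf hsurj (hmin.syndeticallyTransitive hf)
  tfae_have 2 → 4 := fun h => h.deltaTransitive hf hsurj (hmin.stronglyTransitive hf)
  tfae_have 4 → 2 := fun h => h.multiTransitive hf hsurj
  tfae_have 2 → 1 := fun h => h 2 one_le_two
  tfae_finish
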